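/- arXiv:2601.13750 — 2 statements merged into one kernel-verified Lean document; each statement's English description precedes it below -/
import Mathlib

section
/- Let N ≥ 3, set 2⋆ = 2N/(N−2) and N' = N/(N−1). Let ψ : [0,∞) → ℝ be infinitely differentiable with ψ(0) = 0, ψ'(0) = 1, ψ(r) > 0 for r > 0, and ψ''(r) ≥ 0 for all r > 0, and define J(ϱ) = ( ψ( (N ϱ/ω_N)^{1/N} ) / (N ϱ/ω_N)^{1/N} )^{N−1} for ϱ > 0. Let φ : (0,∞) → [0,∞) be nonincreasing and locally absolutely continuous with lim_{ϱ→∞} φ(ϱ) = 0, with ∫₀^∞ φ'(ϱ)² ϱ^{2/N'} J(ϱ) dϱ < ∞ and 0 < ∫₀^∞ φ(ϱ)² ϱ^{−2/N} J(ϱ) dϱ < ∞. Define δ(φ) = inf over a ≥ 0 of ‖φ(ϱ) − a·ϱ^{−1/2⋆}‖_{L^{2⋆,∞}(0,∞)} / ( ∫₀^∞ φ(ϱ)² ϱ^{−2/N} J(ϱ) dϱ )^{1/2}, where ‖g‖_{L^{2⋆,∞}(0,∞)} = sup_{t>0} t · ( Lebesgue measure of {ϱ > 0 : |g(ϱ)|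 > t} )^{1/2⋆}. Then (1/2⋆)² · ( ∫₀^∞ φ(ϱ)² ϱ^{−2/N} J(ϱ) dϱ ) · ( 1 + (δ(φ)/2)⁴ ) ≤ ∫₀^∞ φ'(ϱ)² ϱ^{2/N'} J(ϱ) dϱ. -/
open MeasureTheory
open scoped ENNReal

/-- Surface area of the unit sphere `S^{N-1} ⊂ ℝ^N`. -/
noncomputable def omegaN (N : ℕ) : ℝ :=
  2 * Real.pi ^ ((N : ℝ) / 2) / Real.Gamma ((N : ℝ) / 2)

/-- The Jacobian distortion factor `J(ϱ) = (ψ(r)/r)^{N-1}` with `r = (Nϱ/ω_N)^{1/N}`. -/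
noncomputable def Jfun (N : ℕ) (ψ : ℝ → ℝ) (t : ℝ) : ℝ :=
  if t = 0 then 1 else
    (ψ (((N : ℝ) * t / omegaN N) ^ ((1:ℝ) / (N : ℝ))) /
      (((N : ℝ) * t / omegaN N) ^ ((1:ℝ) / (N : ℝ)))) ^ (N - 1)

/-- The critical Sobolev exponent `2⋆ = 2N/(N-2)`. -/
noncomputable def twoStar (N : ℕ) : ℝ := 2 * (N : ℝ) / ((N : ℝ) - 2)

/-- The Hölder conjugate `N' = N/(N-1)`. -/
noncomputable def Nprime (N : ℕ) : ℝ := (N : ℝ) / ((N : ℝ) - 1)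

/-- The weak (Marcinkiewicz) Lorentz quasinorm
`‖g‖_{L^{p,∞}(0,∞)} = sup_{t>0} t · |{ϱ > 0 : |g(ϱ)| > t}|^{1/p}`. -/
noncomputable def weakLorentz (p : ℝ) (g : ℝ → ℝ) : ℝ≥0∞ :=
  ⨆ t ∈ Set.Ioi (0:ℝ),
    ENNReal.ofReal t * (volume {ϱ : ℝ | 0 < ϱ ∧ t < |g ϱ|}) ^ ((1:ℝ) / p)


lemma ac_congr {f g : ℝ → ℝ} {a b : ℝ} (hf : AbsolutelyContinuousOnInterval f a b)
    (h : ∀ x ∈ Set.uIcc a b, f x = g x) : AbsolutelyContinuousOnInterval g a b := by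
  unfold AbsolutelyContinuousOnInterval at hf ⊢
  refine hf.congr' ?_
  rw [Filter.EventuallyEq, Filter.eventually_inf_principal]
  refine Filter.Eventually.of_forall fun E hE => ?_
  refine Finset.sum_congr rfl fun i hi => ?_
  rw [h _ (hE.1 i hi).1, h _ (hE.1 i hi).2]

lemma ac_phi {φ : ℝ → ℝ} (hanti : AntitoneOn φ (Set.Ioi 0))
    (hac : ∀ a b : ℝ, 0 < a → a ≤ b → φ b - φ a = ∫ t in a..b, deriv φ t)
    {a b : ℝ} (ha : 0 < a) (hab : a ≤ b) : AbsolutelyContinuousOnInterval φ a b := by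
  have hsub : Set.uIcc a b ⊆ Set.Ioi 0 := by
    rw [Set.uIcc_of_le hab]; intro x hx; exact lt_of_lt_of_le ha hx.1
  have hii : IntervalIntegrable (deriv φ) volume a b := by
    have h1 : MonotoneOn (fun x => - φ x) (Set.uIcc a b) := (hanti.mono hsub).neg
    have h2 := h1.intervalIntegrable_deriv.neg
    refine h2.congr (fun x _ => ?_)
    simp
  have h3 := hii.absolutelyContinuousOnInterval_intervalIntegral (c := a) (by simp)
  have h4 : AbsolutelyContinuousOnInterval (fun _ : ℝ => φ a) a b :=
    (contDiff_const.contDiffOn : ContDiffOn ℝ 1 _ _).absolutelyContinuousOnInterval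
  refine ac_congr (h4.fun_add h3) fun x hx => ?_
  rw [Set.uIcc_of_le hab] at hx
  rw [← hac a x ha hx.1]; ring

lemma core_step {φ J : ℝ → ℝ} {α : ℝ}
    (hJm : MonotoneOn J (Set.Ioi 0))
    (hJd : ContDiffOn ℝ 1 J (Set.Ioi 0))
    (hanti : AntitoneOn φ (Set.Ioi 0))
    (hac : ∀ a b : ℝ, 0 < a → a ≤ b → φ b - φ a = ∫ t in a..b, deriv φ t)
    {v : ℝ → ℝ} (hv : v = fun x => 2 * (φ x * deriv φ x * x ^ (2 * α) * J x)
      + 2 * α * (φ x ^ 2 * x ^ (2 * α - 1) * J x))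
    (hvi : IntegrableOn v (Set.Ioi 0))
    {a b : ℝ} (ha : 0 < a) (hab : a ≤ b) :
    ∫ x in a..b, v x ≤ J b * b ^ (2 * α) * φ b ^ 2 - J a * a ^ (2 * α) * φ a ^ 2 := by
  have hsub : Set.uIcc a b ⊆ Set.Ioi 0 := by
    rw [Set.uIcc_of_le hab]; intro x hx; exact lt_of_lt_of_le ha hx.1
  have hφ := ac_phi hanti hac ha hab
  have hk : ContDiffOn ℝ 1 (fun x => J x * x ^ (2 * α)) (Set.Ioi 0) := by
    refine hJd.mul ?_
    intro x hx
    exact (Real.contDiffAt_rpow_const_of_ne (ne_of_gt hx)).contDiffWithinAt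
  have hkac : AbsolutelyContinuousOnInterval (fun x => J x * x ^ (2 * α)) a b :=
    (hk.mono hsub).absolutelyContinuousOnInterval
  have hw : AbsolutelyContinuousOnInterval (fun x => J x * x ^ (2 * α) * (φ x * φ x)) a b :=
    hkac.fun_mul (hφ.fun_mul hφ)
  have hsub' : Set.Ioc a b ⊆ Set.Ioi 0 := fun x hx => lt_trans ha hx.1
  have h1 : ∫ x in a..b, v x ≤ ∫ x in a..b, deriv (fun x => J x * x ^ (2 * α) * (φ x * φ x)) x := by
    refine intervalIntegral.integral_mono_ae_restrict hab ?_ hw.intervalIntegrable_deriv ?_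
    · rw [intervalIntegrable_iff_integrableOn_Ioc_of_le hab]
      exact hvi.mono_set hsub'
    · rw [Filter.EventuallyLE, ae_restrict_iff' measurableSet_Icc]
      filter_upwards [hφ.ae_differentiableAt] with x hx hxm
      have hx0 : 0 < x := lt_of_lt_of_le ha hxm.1
      have hd := (hx (by rwa [Set.uIcc_of_le hab])).hasDerivAt
      have hJx : HasDerivAt J (deriv J x) x :=
        ((hJd.contDiffAt (Ioi_mem_nhds hx0)).differentiableAt (by norm_num)).hasDerivAt
      have hJ' : 0 ≤ deriv J x := by
        have : MonotoneOn J (Set.Ioi 0) := hJm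
        rw [← derivWithin_of_mem_nhds (Ioi_mem_nhds hx0)]
        exact hJm.derivWithin_nonneg
      have hr : HasDerivAt (fun y : ℝ => y ^ (2 * α)) (2 * α * x ^ (2 * α - 1)) x :=
        Real.hasDerivAt_rpow_const (Or.inl hx0.ne')
      have hD := (hJx.mul hr).mul (hd.mul hd)
      have hD' : deriv (fun x => J x * x ^ (2 * α) * (φ x * φ x)) x = _ := hD.deriv
      rw [hD', hv]
      have : 0 ≤ deriv J x * x ^ (2 * α) * (φ x * φ x) := by
        have := Real.rpow_nonneg hx0.le (2 * α)
        have := mul_self_nonneg (φ x)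
        positivity
      simp only [Pi.mul_apply]
      nlinarith
  rw [hw.integral_deriv_eq_sub] at h1
  simpa [pow_two] using h1

lemma core {φ J : ℝ → ℝ} {α : ℝ} (hα : 0 < α)
    (hJ1 : ∀ t, 0 < t → 1 ≤ J t) (hJm : MonotoneOn J (Set.Ioi 0))
    (hJd : ContDiffOn ℝ 1 J (Set.Ioi 0))
    (hanti : AntitoneOn φ (Set.Ioi 0))
    (hac : ∀ a b : ℝ, 0 < a → a ≤ b → φ b - φ a = ∫ t in a..b, deriv φ t)
    (hfin : IntegrableOn
      (fun x => (deriv φ x) ^ 2 * x ^ (1 + 2 * α) * J x) (Set.Ioi 0))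
    (hfin' : IntegrableOn
      (fun x => (φ x) ^ 2 * x ^ (2 * α - 1) * J x) (Set.Ioi 0))
    {A G : ℝ} (hA : A = ∫ x in Set.Ioi (0:ℝ), (φ x) ^ 2 * x ^ (2 * α - 1) * J x)
    (hG : G = ∫ x in Set.Ioi (0:ℝ), (deriv φ x) ^ 2 * x ^ (1 + 2 * α) * J x)
    (hApos : 0 < A) :
    0 ≤ G - α ^ 2 * A ∧
    ∀ x, 0 < x → (x ^ (2 * α) * φ x ^ 2) ^ 2 ≤ 4 * A * (G - α ^ 2 * A) := by
  have e1 : ∀ x : ℝ, 0 < x → x ^ (2 * α) = x * x ^ (2 * α - 1) := by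
    intro x hx
    rw [Real.rpow_sub hx, Real.rpow_one]; field_simp
  have e2 : ∀ x : ℝ, 0 < x → x ^ (1 + 2 * α) = x ^ 2 * x ^ (2 * α - 1) := by
    intro x hx
    rw [Real.rpow_add hx, Real.rpow_one, e1 x hx]; ring
  -- integrability of the cross term
  have hmeas : AEStronglyMeasurable
      (fun x => φ x * deriv φ x * x ^ (2 * α) * J x) (volume.restrict (Set.Ioi 0)) := by
    have m1 : AEMeasurable φ (volume.restrict (Set.Ioi 0)) :=
      aemeasurable_restrict_of_antitoneOn measurableSet_Ioi hanti
    have m2 : AEMeasurable J (volume.restrict (Set.Ioi 0)) :=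
      aemeasurable_restrict_of_monotoneOn measurableSet_Ioi hJm
    have m3 : Measurable (deriv φ) := measurable_deriv φ
    have m4 : Measurable (fun x : ℝ => x ^ (2 * α)) := by fun_prop
    exact (((m1.mul m3.aemeasurable).mul m4.aemeasurable).mul m2).aestronglyMeasurable
  have hc : IntegrableOn (fun x => φ x * deriv φ x * x ^ (2 * α) * J x) (Set.Ioi 0) := by
    refine Integrable.mono' (hfin.add hfin') hmeas ?_
    rw [ae_restrict_iff' measurableSet_Ioi]
    refine Filter.Eventually.of_forall fun x hx => ?_
    have hx : 0 < x := hx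
    have hX : 0 < x ^ (2 * α - 1) := Real.rpow_pos_of_pos hx _
    have hJp : 0 < J x := lt_of_lt_of_le one_pos (hJ1 x hx)
    simp only [Pi.add_apply]
    rw [Real.norm_eq_abs, e1 x hx, e2 x hx, abs_le]
    have hXJ : 0 < x ^ (2 * α - 1) * J x := mul_pos hX hJp
    generalize x ^ (2 * α - 1) = X at *
    generalize deriv φ x = p
    generalize φ x = q
    constructor
    · nlinarith [mul_nonneg hXJ.le (sq_nonneg (p * x + q)), mul_nonneg hXJ.le (sq_nonneg (p * x)), mul_nonneg hXJ.le (sq_nonneg q)]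
    · nlinarith [mul_nonneg hXJ.le (sq_nonneg (p * x - q)), mul_nonneg hXJ.le (sq_nonneg (p * x)), mul_nonneg hXJ.le (sq_nonneg q)]
  obtain ⟨v, hv⟩ : ∃ v : ℝ → ℝ, v = fun x => 2 * (φ x * deriv φ x * x ^ (2 * α) * J x)
      + 2 * α * (φ x ^ 2 * x ^ (2 * α - 1) * J x) := ⟨_, rfl⟩
  have hvi : IntegrableOn v (Set.Ioi 0) := by
    rw [hv]; exact (hc.const_mul 2).add (hfin'.const_mul (2 * α))
  -- limit at infinity
  have htail : ∀ a, 0 < a → J a * a ^ (2 * α) * φ a ^ 2 ≤ - ∫ x in Set.Ioi a, v x := by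
    intro a ha
    by_contra! hcon
    have hva : IntegrableOn v (Set.Ioi a) := hvi.mono_set (Set.Ioi_subset_Ioi ha.le)
    have ht := intervalIntegral_tendsto_integral_Ioi a hva Filter.tendsto_id
    set W := J a * a ^ (2 * α) * φ a ^ 2 with hW
    set L := ∫ x in Set.Ioi a, v x with hL
    have hε : 0 < (W + L) / 2 := by linarith
    have hev := ht.eventually (lt_mem_nhds (show L - (W + L) / 2 < L by linarith))
    obtain ⟨B, hB⟩ := Filter.eventually_atTop.1 hev
    have hbig : ∀ b, max a B ≤ b → (W + L) / 2 ≤ J b * b ^ (2 * α) * φ b ^ 2 := by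
      intro b hb
      have h1 := core_step hJm hJd hanti hac hv hvi ha (le_trans (le_max_left _ _) hb)
      have h2 := hB b (le_trans (le_max_right _ _) hb)
      simp only [id] at h2
      linarith
    apply not_integrableOn_Ioi_inv (a := max a B)
    have hmp : 0 < max a B := lt_max_of_lt_left ha
    have h3 : IntegrableOn (fun x => ((W + L) / 2)⁻¹ * ((φ x) ^ 2 * x ^ (2 * α - 1) * J x))
        (Set.Ioi (max a B)) := (hfin'.mono_set (Set.Ioi_subset_Ioi hmp.le)).const_mul _
    refine Integrable.mono' h3 (by fun_prop) ?_
    rw [ae_restrict_iff' measurableSet_Ioi]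
    refine Filter.Eventually.of_forall fun x hx => ?_
    have hx0 : 0 < x := lt_trans hmp hx
    have h4 := hbig x (le_of_lt hx)
    rw [e1 x hx0] at h4
    rw [Real.norm_eq_abs, abs_of_pos (inv_pos.2 hx0), inv_mul_eq_div, le_div_iff₀ hε,
      inv_mul_le_iff₀ hx0]
    linarith
  have hWnn : ∀ a, 0 < a → a ^ (2 * α) * φ a ^ 2 ≤ J a * a ^ (2 * α) * φ a ^ 2 := by
    intro a ha
    have : 0 ≤ a ^ (2 * α) * φ a ^ 2 := by positivity
    nlinarith [hJ1 a ha]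
  -- total integral of v
  have hvneg : ∫ x in Set.Ioi (0:ℝ), v x ≤ 0 := by
    have hmain : ∀ a, 0 < a → ∫ x in Set.Ioi a, v x ≤ 0 := by
      intro a ha
      have := htail a ha
      have h2 := hWnn a ha
      have : 0 ≤ a ^ (2 * α) * φ a ^ 2 := by positivity
      linarith
    have hcov : AECover (volume.restrict (Set.Ioi (0:ℝ))) Filter.atTop
        (fun n : ℕ => Set.Ioi (1 / ((n:ℝ) + 1))) := 
      aecover_Ioi_of_Ioi tendsto_one_div_add_atTop_nhds_zero_nat
    have := hcov.integral_tendsto_of_countably_generated hvi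
    refine le_of_tendsto' this fun n => ?_
    have hn : (0:ℝ) < 1 / ((n:ℝ) + 1) := by positivity
    rw [Measure.restrict_restrict measurableSet_Ioi,
      Set.inter_eq_left.2 (Set.Ioi_subset_Ioi hn.le)]
    exact hmain _ hn
  set C := ∫ x in Set.Ioi (0:ℝ), φ x * deriv φ x * x ^ (2 * α) * J x with hC
  have hvC : ∫ x in Set.Ioi (0:ℝ), v x = 2 * C + 2 * α * A := by
    rw [hv, integral_add (hc.const_mul 2) (hfin'.const_mul (2 * α)), integral_const_mul,
      integral_const_mul, hC, hA]
  have hq : IntegrableOn (fun x => (deriv φ x) ^ 2 * x ^ (1 + 2 * α) * J x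
      + 2 * α * (φ x * deriv φ x * x ^ (2 * α) * J x)
      + α ^ 2 * ((φ x) ^ 2 * x ^ (2 * α - 1) * J x)) (Set.Ioi 0) :=
    (hfin.add (hc.const_mul (2 * α))).add (hfin'.const_mul (α ^ 2))
  have hqI : ∫ x in Set.Ioi (0:ℝ), ((deriv φ x) ^ 2 * x ^ (1 + 2 * α) * J x
      + 2 * α * (φ x * deriv φ x * x ^ (2 * α) * J x)
      + α ^ 2 * ((φ x) ^ 2 * x ^ (2 * α - 1) * J x)) = G + 2 * α * C + α ^ 2 * A := by
    have h12 : IntegrableOn (fun x => (deriv φ x) ^ 2 * x ^ (1 + 2 * α) * J x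
      + 2 * α * (φ x * deriv φ x * x ^ (2 * α) * J x)) (Set.Ioi 0) :=
      hfin.add (hc.const_mul (2 * α))
    rw [integral_add h12 (hfin'.const_mul (α ^ 2)),
      integral_add hfin (hc.const_mul (2 * α)), integral_const_mul,
      integral_const_mul, hC, hA, hG]
  have hqnn : 0 ≤ G + 2 * α * C + α ^ 2 * A := by
    rw [← hqI]
    refine setIntegral_nonneg measurableSet_Ioi fun x hx => ?_
    have hx : 0 < x := hx
    have hX : 0 < x ^ (2 * α - 1) := Real.rpow_pos_of_pos hx _
    have hJp : 0 < J x := lt_of_lt_of_le one_pos (hJ1 x hx)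
    rw [e1 x hx, e2 x hx]
    have := mul_nonneg (mul_pos hX hJp).le (sq_nonneg (deriv φ x * x + α * φ x))
    nlinarith
  have hDq : G + 2 * α * C + α ^ 2 * A ≤ G - α ^ 2 * A := by
    have : C + α * A ≤ 0 := by linarith
    nlinarith
  refine ⟨by linarith, fun a ha => ?_⟩
  have hm0 : 0 ≤ a ^ (2 * α) * φ a ^ 2 := by positivity
  rcases hm0.eq_or_lt with hm0 | hm
  · rw [← hm0]
    have : 0 ≤ G - α ^ 2 * A := by linarith
    have := mul_nonneg hApos.le this
    linarith
  set m := a ^ (2 * α) * φ a ^ 2 with hmdef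
  have hlam : ∀ l : ℝ, 0 < l → m ≤ l * A + l⁻¹ * (G + 2 * α * C + α ^ 2 * A) := by
    intro l hl
    have hI : IntegrableOn (fun x => l * ((φ x) ^ 2 * x ^ (2 * α - 1) * J x) +
        l⁻¹ * ((deriv φ x) ^ 2 * x ^ (1 + 2 * α) * J x
      + 2 * α * (φ x * deriv φ x * x ^ (2 * α) * J x)
      + α ^ 2 * ((φ x) ^ 2 * x ^ (2 * α - 1) * J x))) (Set.Ioi 0) :=
      (hfin'.const_mul l).add (hq.const_mul l⁻¹)
    have hpt : ∀ x, 0 < x → 0 ≤ l * ((φ x) ^ 2 * x ^ (2 * α - 1) * J x) +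
        l⁻¹ * ((deriv φ x) ^ 2 * x ^ (1 + 2 * α) * J x
      + 2 * α * (φ x * deriv φ x * x ^ (2 * α) * J x)
      + α ^ 2 * ((φ x) ^ 2 * x ^ (2 * α - 1) * J x)) ∧ - v x ≤ l * ((φ x) ^ 2 * x ^ (2 * α - 1) * J x) +
        l⁻¹ * ((deriv φ x) ^ 2 * x ^ (1 + 2 * α) * J x
      + 2 * α * (φ x * deriv φ x * x ^ (2 * α) * J x)
      + α ^ 2 * ((φ x) ^ 2 * x ^ (2 * α - 1) * J x)) := by
      intro x hx
      have hX : 0 < x ^ (2 * α - 1) := Real.rpow_pos_of_pos hx _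
      have hJp : 0 < J x := lt_of_lt_of_le one_pos (hJ1 x hx)
      rw [hv]
      simp only
      rw [e1 x hx, e2 x hx]
      generalize x ^ (2 * α - 1) = X at *
      generalize deriv φ x = p
      generalize φ x = q
      generalize J x = j at *
      have hXJ := (mul_pos hX hJp)
      constructor
      · have : 0 ≤ X * j * (l * q ^ 2 + l⁻¹ * (p * x + α * q) ^ 2) := by positivity
        linarith
      · have h1 : 0 ≤ X * j * (l * (q + l⁻¹ * (p * x + α * q)) ^ 2) := by positivity
        have h2 : l * (q + l⁻¹ * (p * x + α * q)) ^ 2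
            = l * q ^ 2 + 2 * q * (p * x + α * q) + l⁻¹ * (p * x + α * q) ^ 2 := by
          field_simp; ring
        rw [h2] at h1
        linarith
    calc m ≤ J a * a ^ (2 * α) * φ a ^ 2 := hWnn a ha
      _ ≤ - ∫ x in Set.Ioi a, v x := htail a ha
      _ = ∫ x in Set.Ioi a, - v x := by rw [integral_neg]
      _ ≤ ∫ x in Set.Ioi a, _ := setIntegral_mono_on
          (hvi.mono_set (Set.Ioi_subset_Ioi ha.le)).neg
          (hI.mono_set (Set.Ioi_subset_Ioi ha.le)) measurableSet_Ioi
          (fun x hx => (hpt x (lt_trans ha hx)).2)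
      _ ≤ ∫ x in Set.Ioi 0, _ := setIntegral_mono_set hI
          ((ae_restrict_iff' measurableSet_Ioi).2
            (Filter.Eventually.of_forall fun x hx => (hpt x hx).1))
          (Set.Ioi_subset_Ioi ha.le).eventuallyLE
      _ = _ := by
          rw [integral_add (hfin'.const_mul l) (hq.const_mul l⁻¹), integral_const_mul,
            integral_const_mul, hqI, hA]
  have h := hlam (m / (2 * A)) (by positivity)
  have h2 : m * (m / (2 * A)) ≤ (m / (2 * A)) ^ 2 * A + (G + 2 * α * C + α ^ 2 * A) := by
    have hl : 0 < m / (2 * A) := by positivity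
    have := mul_le_mul_of_nonneg_left h hl.le
    have e : (m / (2 * A)) * (m / (2 * A))⁻¹ = 1 := mul_inv_cancel₀ hl.ne'
    nlinarith
  have h3 : m * (m / (2 * A)) - (m / (2 * A)) ^ 2 * A = m ^ 2 / (4 * A) := by
    field_simp; ring
  have h4 : m ^ 2 / (4 * A) ≤ G - α ^ 2 * A := by linarith
  rw [div_le_iff₀ (by positivity)] at h4
  linarith

lemma omegaN_pos {N : ℕ} (hN : 3 ≤ N) : 0 < omegaN N := by
  have : (0:ℝ) < (N:ℝ) / 2 := by
    have : (3:ℝ) ≤ N := by exact_mod_cast hN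
    linarith
  have := Real.Gamma_pos_of_pos this
  have := Real.pi_pos
  unfold omegaN
  positivity

lemma Jfun_props (N : ℕ) (hN : 3 ≤ N) (ψ : ℝ → ℝ)
    (hψ : ContDiff ℝ (⊤ : ℕ∞) ψ) (h0 : ψ 0 = 0) (h1 : deriv ψ 0 = 1)
    (hconv : ∀ r : ℝ, 0 < r → 0 ≤ deriv (deriv ψ) r) :
    (∀ t, 0 < t → 1 ≤ Jfun N ψ t) ∧ MonotoneOn (Jfun N ψ) (Set.Ioi 0) ∧
    ContDiffOn ℝ 1 (Jfun N ψ) (Set.Ioi 0) := by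
  have hω := omegaN_pos hN
  have hN0 : (0:ℝ) < N := by
    have : (3:ℝ) ≤ N := by exact_mod_cast hN
    linarith
  have hcx : ConvexOn ℝ (Set.Ici 0) ψ := by
    refine convexOn_of_deriv2_nonneg (convex_Ici 0) hψ.continuous.continuousOn
      (hψ.differentiable (by simp)).differentiableOn ?_ ?_
    · have : ContDiff ℝ 1 (deriv ψ) := by
        have h2 : ContDiff ℝ ((2 : ℕ∞) : WithTop ℕ∞) ψ :=
          hψ.of_le (WithTop.coe_le_coe.2 le_top)
        have h3 : ContDiff ℝ (1 + 1) ψ := by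
          rw [one_add_one_eq_two]; exact h2
        exact (contDiff_succ_iff_deriv.1 h3).2.2
      exact (this.differentiable (by simp)).differentiableOn
    · intro x hx
      rw [interior_Ici] at hx
      simpa using hconv x hx
  have hr : ∀ t : ℝ, 0 < t → 0 < ((N : ℝ) * t / omegaN N) ^ ((1:ℝ) / (N : ℝ)) := by
    intro t ht; positivity
  have hs1 : ∀ r, 0 < r → 1 ≤ ψ r / r := by
    intro r hr
    have := hcx.deriv_le_slope (x := 0) (y := r) (by simp) hr.le hr
      (hψ.differentiable (by simp) 0)
    rw [h1, slope_def_field, h0] at this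
    simpa using this
  have hsm : ∀ r s, 0 < r → r ≤ s → ψ r / r ≤ ψ s / s := by
    intro r s hr hrs
    have := hcx.secant_mono (a := 0) (x := r) (y := s) (by simp) hr.le (hr.le.trans hrs)
      hr.ne' (hr.trans_le hrs).ne' hrs
    simpa [h0] using this
  refine ⟨?_, ?_, ?_⟩
  · intro t ht
    rw [Jfun, if_neg ht.ne']
    exact one_le_pow₀ (hs1 _ (hr t ht))
  · intro s hs t ht hst
    have hs : 0 < s := hs
    have ht : 0 < t := ht
    rw [Jfun, Jfun, if_neg hs.ne', if_neg ht.ne']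
    have hrs := hr s hs
    refine pow_le_pow_left₀ (le_trans zero_le_one (hs1 _ hrs)) (hsm _ _ hrs ?_) _
    refine Real.rpow_le_rpow (by positivity) ?_ (by positivity)
    gcongr
  · have hrd : ContDiffOn ℝ 1 (fun t : ℝ => ((N : ℝ) * t / omegaN N) ^ ((1:ℝ) / (N : ℝ)))
        (Set.Ioi 0) := by
      refine ContDiffOn.rpow_const_of_ne (by fun_prop) ?_
      intro t ht
      have ht : 0 < t := ht
      positivity
    have hψ1 : ContDiff ℝ 1 ψ := hψ.of_le (by exact_mod_cast le_top)
    have := ((hψ1.comp_contDiffOn hrd).div hrd (fun t ht => (hr t ht).ne')).pow (N - 1)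
    refine this.congr fun t ht => ?_
    have ht : 0 < t := ht
    rw [Jfun, if_neg ht.ne']
    rfl

lemma weak_bound {p K : ℝ} (hp : 0 < p) (hK : 0 ≤ K) {φ : ℝ → ℝ}
    (hφ0 : ∀ x : ℝ, 0 < x → 0 ≤ φ x)
    (h : ∀ x, 0 < x → x ^ (1 / p) * φ x ≤ K) :
    weakLorentz p φ ≤ ENNReal.ofReal K := by
  unfold weakLorentz
  refine iSup₂_le fun t ht => ?_
  have ht : 0 < t := ht
  have hsub : {x : ℝ | 0 < x ∧ t < |φ x|} ⊆ Set.Ioc 0 ((K / t) ^ p) := by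
    rintro x ⟨hx, hxt⟩
    rw [abs_of_nonneg (hφ0 x hx)] at hxt
    refine ⟨hx, ?_⟩
    have hX : 0 < x ^ (1 / p) := Real.rpow_pos_of_pos hx _
    have h1 : x ^ (1 / p) ≤ K / t := by
      rw [le_div_iff₀ ht]
      exact le_trans (mul_le_mul_of_nonneg_left hxt.le hX.le) (h x hx)
    have h2 := Real.rpow_le_rpow hX.le h1 hp.le
    rwa [← Real.rpow_mul hx.le, one_div_mul_cancel hp.ne', Real.rpow_one] at h2
  have hKt : 0 ≤ K / t := by positivity
  calc ENNReal.ofReal t * (volume {x : ℝ | 0 < x ∧ t < |φ x|}) ^ ((1:ℝ) / p)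
      ≤ ENNReal.ofReal t * (ENNReal.ofReal ((K / t) ^ p)) ^ ((1:ℝ) / p) := by
        gcongr
        refine (measure_mono hsub).trans ?_
        simp
    _ = ENNReal.ofReal K := by
        rw [ENNReal.ofReal_rpow_of_nonneg (by positivity) (by positivity),
          ← Real.rpow_mul hKt, mul_one_div_cancel hp.ne', Real.rpow_one,
          ← ENNReal.ofReal_mul ht.le, mul_div_cancel₀ _ ht.ne']

/-- Quantitative stability of the one-dimensional weighted Hardy
inequality arising from a Cartan–Hadamard model manifold:
`(1/2⋆)² (∫ φ² ϱ^{-2/N} J)(1 + (δ(φ)/2)⁴) ≤ ∫ φ'² ϱ^{2/N'} J`, where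
`δ(φ) = inf_{a ≥ 0} ‖φ - a ϱ^{-1/2⋆}‖_{L^{2⋆,∞}} / (∫ φ² ϱ^{-2/N} J)^{1/2}`. -/
theorem stmt_10 (N : ℕ) (hN : 3 ≤ N) (ψ : ℝ → ℝ)
    (hψ : ContDiff ℝ (⊤ : ℕ∞) ψ) (h0 : ψ 0 = 0) (h1 : deriv ψ 0 = 1)
    (hpos : ∀ r : ℝ, 0 < r → 0 < ψ r)
    (hconv : ∀ r : ℝ, 0 < r → 0 ≤ deriv (deriv ψ) r)
    (φ : ℝ → ℝ) (hφ0 : ∀ ϱ : ℝ, 0 < ϱ → 0 ≤ φ ϱ)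
    (hanti : AntitoneOn φ (Set.Ioi 0))
    (hac : ∀ a b : ℝ, 0 < a → a ≤ b → φ b - φ a = ∫ t in a..b, deriv φ t)
    (hlim : Filter.Tendsto φ Filter.atTop (nhds 0))
    (hfin : IntegrableOn
      (fun ϱ => (deriv φ ϱ) ^ 2 * ϱ ^ ((2:ℝ) / Nprime N) * Jfun N ψ ϱ) (Set.Ioi 0))
    (hfin' : IntegrableOn
      (fun ϱ => (φ ϱ) ^ 2 * ϱ ^ (-(2:ℝ) / (N : ℝ)) * Jfun N ψ ϱ) (Set.Ioi 0))
    (hpos' : 0 < ∫ ϱ in Set.Ioi (0:ℝ), (φ ϱ) ^ 2 * ϱ ^ (-(2:ℝ) / (N : ℝ)) * Jfun N ψ ϱ) :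
    (1 / twoStar N) ^ 2 *
      (∫ ϱ in Set.Ioi (0:ℝ), (φ ϱ) ^ 2 * ϱ ^ (-(2:ℝ) / (N : ℝ)) * Jfun N ψ ϱ) *
      (1 +
        (((⨅ a ∈ Set.Ici (0:ℝ),
            weakLorentz (twoStar N)
              (fun ϱ => φ ϱ - a * ϱ ^ (-(1:ℝ) / twoStar N))).toReal /
          Real.sqrt
            (∫ ϱ in Set.Ioi (0:ℝ),
              (φ ϱ) ^ 2 * ϱ ^ (-(2:ℝ) / (N : ℝ)) * Jfun N ψ ϱ) / 2) ^ 4))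
      ≤ ∫ ϱ in Set.Ioi (0:ℝ), (deriv φ ϱ) ^ 2 * ϱ ^ ((2:ℝ) / Nprime N) * Jfun N ψ ϱ := by
  have hN3 : (3:ℝ) ≤ N := by exact_mod_cast hN
  obtain ⟨hJ1, hJm, hJd⟩ := Jfun_props N hN ψ hψ h0 h1 hconv
  have hp : 0 < twoStar N := by
    unfold twoStar
    have : (0:ℝ) < N - 2 := by linarith
    positivity
  obtain ⟨α, hα⟩ : ∃ α : ℝ, α = 1 / twoStar N := ⟨_, rfl⟩
  have hαpos : 0 < α := by rw [hα]; positivity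
  have hα2 : α = ((N:ℝ) - 2) / (2 * N) := by rw [hα, twoStar, one_div_div]
  have hα1 : α ≤ 1 := by
    rw [hα2, div_le_one (by positivity)]; linarith
  have hN2 : (N:ℝ) - 1 ≠ 0 := by linarith
  have x1 : (2:ℝ) / Nprime N = 1 + 2 * α := by
    rw [hα2, Nprime]; field_simp; ring
  have x2 : -(2:ℝ) / (N : ℝ) = 2 * α - 1 := by
    rw [hα2]; field_simp; ring
  rw [x1] at hfin ⊢
  rw [x2] at hfin' hpos' ⊢
  rw [← hα]
  obtain ⟨A, hA⟩ : ∃ A, A = ∫ x in Set.Ioi (0:ℝ), (φ x) ^ 2 * x ^ (2 * α - 1) * Jfun N ψ x :=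
    ⟨_, rfl⟩
  obtain ⟨G, hG⟩ : ∃ G, G = ∫ x in Set.Ioi (0:ℝ),
    (deriv φ x) ^ 2 * x ^ (1 + 2 * α) * Jfun N ψ x := ⟨_, rfl⟩
  rw [← hA] at hpos' ⊢
  rw [← hG]
  obtain ⟨hD, hsup⟩ := core hαpos hJ1 hJm hJd hanti hac hfin hfin' hA hG hpos'
  obtain ⟨D, hDdef⟩ : ∃ D, D = G - α ^ 2 * A := ⟨_, rfl⟩
  rw [← hDdef] at hD hsup
  obtain ⟨K, hK⟩ : ∃ K, K = Real.sqrt (Real.sqrt (4 * A * D)) := ⟨_, rfl⟩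
  have hK0 : 0 ≤ K := by rw [hK]; positivity
  have hAD : 0 ≤ 4 * A * D := by positivity
  have hK4 : K ^ 4 = 4 * A * D := by
    have : K ^ 4 = (K ^ 2) ^ 2 := by ring
    rw [this, hK, Real.sq_sqrt (Real.sqrt_nonneg _), Real.sq_sqrt hAD]
  have hb : weakLorentz (twoStar N) φ ≤ ENNReal.ofReal K := by
    refine weak_bound hp hK0 hφ0 fun x hx => ?_
    rw [← hα, hK]
    apply Real.le_sqrt_of_sq_le
    apply Real.le_sqrt_of_sq_le
    have e : (x ^ α * φ x) ^ 2 = x ^ (2 * α) * φ x ^ 2 := by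
      rw [mul_pow, ← Real.rpow_natCast (x ^ α) 2, ← Real.rpow_mul hx.le]
      congr 2
      push_cast; ring
    rw [e]
    exact hsup x hx
  obtain ⟨d, hd⟩ : ∃ d, d = (⨅ a ∈ Set.Ici (0:ℝ),
            weakLorentz (twoStar N)
              (fun ϱ => φ ϱ - a * ϱ ^ (-(1:ℝ) / twoStar N))).toReal := ⟨_, rfl⟩
  rw [← hd]
  have hd0 : 0 ≤ d := by rw [hd]; exact ENNReal.toReal_nonneg
  have hdK : d ≤ K := by
    rw [hd]
    refine ENNReal.toReal_le_of_le_ofReal hK0 (le_trans ?_ hb)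
    refine (iInf₂_le (0:ℝ) (by simp)).trans ?_
    simp
  have hd4 : d ^ 4 ≤ 4 * A * D := hK4 ▸ pow_le_pow_left₀ hd0 hdK 4
  have hsq : (d / Real.sqrt A / 2) ^ 4 = d ^ 4 / (16 * A ^ 2) := by
    have : Real.sqrt A ^ 4 = A ^ 2 := by
      have : Real.sqrt A ^ 4 = (Real.sqrt A ^ 2) ^ 2 := by ring
      rw [this, Real.sq_sqrt hpos'.le]
    rw [div_pow, div_pow, this]
    field_simp; norm_num
  rw [hsq]
  have h5 : α ^ 2 * A * (d ^ 4 / (16 * A ^ 2)) ≤ D := by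
    have e : α ^ 2 * A * (d ^ 4 / (16 * A ^ 2)) = α ^ 2 * d ^ 4 / (16 * A) := by
      field_simp
    rw [e, div_le_iff₀ (by positivity)]
    have hα3 : α ^ 2 ≤ 1 := by nlinarith
    have : α ^ 2 * d ^ 4 ≤ 1 * d ^ 4 := mul_le_mul_of_nonneg_right hα3 (by positivity)
    nlinarith [mul_nonneg hpos'.le hD]
  linarith
end

section
/- Let N ≥ 3 and let ψ : [0,∞) → ℝ be infinitely differentiable with ψ(0) = 0, ψ'(0) = 1, ψ(r) > 0 for r > 0, and ψ''(r) ≥ 0 for all r > 0. Define V(r) = ω_N ∫₀^r ψ(t)^{N−1} dt and let G : [0,∞) → [0,∞) be the inverse function of V. Then for every nonincreasing, locally absolutely continuous function f : (0,∞) → [0,∞) with lim_{s→∞} f(s) = 0 and ∫₀^∞ f'(s)² · ( ψ(G(s)) · G(s) )^{N−1} ds < ∞, one has ((N−2)/2)² ∫₀^∞ f(s)² · G(s)^{N−3} · ψ(G(s))^{1−N} ds ≤ ω_N² ∫₀^∞ f'(s)² · ( ψ(G(s)) · G(s) )^{N−1} ds. -/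
open MeasureTheory

lemma aux_Ioi (g : ℝ → ENNReal) (s : ℝ) (C : ENNReal)
    (h : ∀ b, s < b → ∫⁻ x in Set.Ioc s b, g x ≤ C) : ∫⁻ x in Set.Ioi s, g x ≤ C := by
  have hU : Set.Ioi s = ⋃ n : ℕ, Set.Ioc s (s + 1 + n) := by
    ext x
    simp only [Set.mem_Ioi, Set.mem_iUnion, Set.mem_Ioc]
    constructor
    · intro hx
      obtain ⟨n, hn⟩ := exists_nat_ge (x - s - 1)
      exact ⟨n, hx, by linarith⟩
    · rintro ⟨n, hn, _⟩
      exact hn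
  rw [hU, setLIntegral_iUnion_of_directed]
  · refine iSup_le fun n => h _ ?_
    have : (0:ℝ) ≤ n := n.cast_nonneg
    linarith
  · refine Monotone.directed_le fun m n hmn => Set.Ioc_subset_Ioc le_rfl ?_
    have : (m:ℝ) ≤ n := by exact_mod_cast hmn
    linarith

lemma aux_Ioc (g : ℝ → ENNReal) (t : ℝ) (ht : 0 < t) (C : ENNReal)
    (h : ∀ a, 0 < a → a ≤ t → ∫⁻ x in Set.Ioc a t, g x ≤ C) :
    ∫⁻ x in Set.Ioc 0 t, g x ≤ C := by
  have hU : Set.Ioc 0 t = ⋃ n : ℕ, Set.Ioc (t / (n + 1)) t := by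
    ext x
    simp only [Set.mem_iUnion, Set.mem_Ioc]
    constructor
    · rintro ⟨hx, hxt⟩
      obtain ⟨n, hn⟩ := exists_nat_gt (t / x)
      refine ⟨n, ?_, hxt⟩
      have hn0 : (0:ℝ) ≤ n := n.cast_nonneg
      rw [div_lt_iff₀ hx] at hn
      rw [div_lt_iff₀ (by linarith)]
      nlinarith
    · rintro ⟨n, hn, hxt⟩
      exact ⟨lt_trans (by positivity) hn, hxt⟩
  rw [hU, setLIntegral_iUnion_of_directed]
  · refine iSup_le fun n => h _ (by positivity) ?_
    exact div_le_self ht.le (by linarith [n.cast_nonneg (α := ℝ)])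
  · refine Monotone.directed_le fun m n hmn => Set.Ioc_subset_Ioc ?_ le_rfl
    have : (m:ℝ) ≤ n := by exact_mod_cast hmn
    gcongr

lemma aux_ftc (F F' : ℝ → ℝ) (a b : ℝ) (hab : a ≤ b)
    (hd : ∀ x ∈ Set.Icc a b, HasDerivAt F (F' x) x)
    (hc : ContinuousOn F' (Set.Icc a b)) (hn : ∀ x ∈ Set.Icc a b, 0 ≤ F' x) :
    ∫⁻ x in Set.Ioc a b, ENNReal.ofReal (F' x) = ENNReal.ofReal (F b - F a) := by
  have hi : IntervalIntegrable F' volume a b := by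
    apply ContinuousOn.intervalIntegrable
    rwa [Set.uIcc_of_le hab]
  rw [← intervalIntegral.integral_eq_sub_of_hasDerivAt (f := F) (f' := F')
    (by rwa [Set.uIcc_of_le hab]) hi, intervalIntegral.integral_of_le hab,
    ofReal_integral_eq_lintegral_ofReal]
  · exact (intervalIntegrable_iff_integrableOn_Ioc_of_le hab).1 hi
  · refine (ae_restrict_iff' measurableSet_Ioc).2 (Filter.Eventually.of_forall fun x hx => ?_)
    exact hn x (Set.Ioc_subset_Icc_self hx)

lemma aux_ofReal {α : Type*} [MeasurableSpace α] (μ : Measure α) (g : α → ℝ)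
    (hg : ∀ᵐ x ∂μ, 0 ≤ g x) :
    ENNReal.ofReal (∫ x, g x ∂μ) ≤ ∫⁻ x, ENNReal.ofReal (g x) ∂μ := by
  by_cases h : Integrable g μ
  · rw [ofReal_integral_eq_lintegral_ofReal h hg]
  · rw [integral_undef h]
    simp

lemma aux_cs (μ : Measure ℝ) (F E : ℝ → ENNReal) (hF : Measurable F) (hE : Measurable E) :
    (∫⁻ x, F x * E x ∂μ) ^ 2 ≤ (∫⁻ x, F x ^ 2 ∂μ) * ∫⁻ x, E x ^ 2 ∂μ := by
  have h := ENNReal.lintegral_mul_le_Lp_mul_Lq μ Real.HolderConjugate.two_two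
    hF.aemeasurable hE.aemeasurable
  have h2 := pow_le_pow_left' h 2
  refine h2.trans_eq ?_
  rw [mul_pow, ← ENNReal.rpow_natCast, ← ENNReal.rpow_mul, ← ENNReal.rpow_natCast,
    ← ENNReal.rpow_mul]
  norm_num

lemma aux_swap (v H : ℝ → ENNReal) (hv : Measurable v) (hH : Measurable H) :
    ∫⁻ s in Set.Ioi (0:ℝ), v s * ∫⁻ t in Set.Ioi s, H t
      ≤ ∫⁻ t in Set.Ioi (0:ℝ), H t * ∫⁻ s in Set.Ioc 0 t, v s := by
  set μ := volume.restrict (Set.Ioi (0:ℝ)) with hμ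
  let K : ℝ → ℝ → ENNReal := fun s t => {p : ℝ × ℝ | p.1 < p.2}.indicator
    (fun p => v p.1 * H p.2) (s, t)
  have hK : Measurable (Function.uncurry K) := by
    have : Function.uncurry K = {p : ℝ × ℝ | p.1 < p.2}.indicator
      (fun p => v p.1 * H p.2) := by
      ext ⟨s, t⟩
      rfl
    rw [this]
    exact Measurable.indicator (by fun_prop) (measurableSet_lt measurable_fst measurable_snd)
  have e1 : ∫⁻ s, v s * (∫⁻ t in Set.Ioi s, H t) ∂μ = ∫⁻ s, ∫⁻ t, K s t ∂μ ∂μ := by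
    refine setLIntegral_congr_fun measurableSet_Ioi fun s hs => ?_
    have hs : 0 < s := hs
    rw [← lintegral_const_mul _ hH]
    have : ∀ t, K s t = (Set.Ioi s).indicator (fun t => v s * H t) t := by
      intro t
      by_cases h : s < t <;> simp [K, Set.indicator, h]
    simp_rw [this]
    rw [lintegral_indicator measurableSet_Ioi, hμ, Measure.restrict_restrict measurableSet_Ioi,
      Set.Ioi_inter_Ioi, max_eq_left hs.le]
  have e2 : ∫⁻ t, ∫⁻ s, K s t ∂μ ∂μ ≤ ∫⁻ t, H t * (∫⁻ s in Set.Ioc 0 t, v s) ∂μ := by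
    refine lintegral_mono fun t => ?_
    simp only
    rw [← lintegral_const_mul _ hv]
    have : ∀ s, K s t = (Set.Iio t).indicator (fun s => H t * v s) s := by
      intro s
      by_cases h : s < t <;> simp [K, Set.indicator, h, mul_comm]
    simp_rw [this]
    rw [lintegral_indicator measurableSet_Iio, hμ, Measure.restrict_restrict measurableSet_Iio]
    refine lintegral_mono_set fun x hx => ?_
    exact ⟨hx.2, le_of_lt hx.1⟩
  rw [e1, lintegral_lintegral_swap hK.aemeasurable]
  exact e2

lemma aux_core (c : ℝ) (hc : 0 < c) (f g q h : ℝ → ℝ) (hgm : Measurable g) (hqm : Measurable q)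
    (hhm : Measurable h) (hg : ∀ s, 0 < s → 0 < g s) (hq : ∀ s, 0 < s → 0 < q s)
    (hd : ∀ s, 0 < s → HasDerivAt g (q s) s) (hqc : ContinuousOn q (Set.Ioi 0))
    (hh : ∀ s, 0 < s → 0 ≤ h s) (hf : ∀ s, 0 < s → 0 ≤ f s)
    (hfh : ∀ s, 0 < s → ENNReal.ofReal (f s) ≤ ∫⁻ t in Set.Ioi s, ENNReal.ofReal (h t)) :
    ∫⁻ s in Set.Ioi (0:ℝ), ENNReal.ofReal (c ^ 2 * f s ^ 2 * (g s ^ (2 * c - 1) * q s)) ≤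
      ∫⁻ s in Set.Ioi (0:ℝ), ENNReal.ofReal (h s ^ 2 * (g s ^ (2 * c + 1) / q s)) := by
  have hgc : ContinuousOn g (Set.Ioi 0) := fun s hs => (hd s hs).continuousAt.continuousWithinAt
  have hpc : ∀ p : ℝ, ContinuousOn (fun s => g s ^ p * q s) (Set.Ioi 0) := fun p =>
    (hgc.rpow_const fun s hs => Or.inl (hg s hs).ne').mul hqc
  have hpn : ∀ p s : ℝ, 0 < s → 0 ≤ g s ^ p * q s := fun p s hs =>
    (mul_pos (Real.rpow_pos_of_pos (hg s hs) _) (hq s hs)).le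
  have hD : ∀ s, 0 < s → ∫⁻ t in Set.Ioi s, ENNReal.ofReal (g t ^ (-c - 1) * q t) ≤
      ENNReal.ofReal (g s ^ (-c) / c) := by
    intro s hs
    refine aux_Ioi _ _ _ fun b hb => ?_
    rw [aux_ftc (fun x => - (g x ^ (-c) / c)) (fun t => g t ^ (-c - 1) * q t) s b hb.le]
    · apply ENNReal.ofReal_le_ofReal
      have := Real.rpow_pos_of_pos (hg b (hs.trans hb)) (-c)
      have : 0 < g b ^ (-c) / c := by positivity
      linarith
    · intro x hx
      have hx0 : 0 < x := hs.trans_le hx.1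
      have := (((hd x hx0).rpow_const (p := -c) (Or.inl (hg x hx0).ne')).div_const c).neg
      refine this.congr_deriv ?_
      field_simp
    · exact (hpc _).mono fun x hx => hs.trans_le hx.1
    · exact fun x hx => hpn _ _ (hs.trans_le hx.1)
  have hE : ∀ t, 0 < t → ∫⁻ s in Set.Ioc 0 t, ENNReal.ofReal (g s ^ (c - 1) * q s) ≤
      ENNReal.ofReal (g t ^ c / c) := by
    intro t ht
    refine aux_Ioc _ _ ht _ fun a ha hat => ?_
    rw [aux_ftc (fun x => (g x ^ c / c)) (fun t => g t ^ (c - 1) * q t) a t hat]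
    · apply ENNReal.ofReal_le_ofReal
      have := Real.rpow_pos_of_pos (hg a ha) c
      have : 0 < g a ^ c / c := by positivity
      linarith
    · intro x hx
      have hx0 : 0 < x := ha.trans_le hx.1
      have := (((hd x hx0).rpow_const (p := c) (Or.inl (hg x hx0).ne')).div_const c)
      refine this.congr_deriv ?_
      field_simp
    · exact (hpc _).mono fun x hx => ha.trans_le hx.1
    · exact fun x hx => hpn _ _ (ha.trans_le hx.1)
  let H : ℝ → ENNReal := fun t => ENNReal.ofReal (h t ^ 2 * (g t ^ (c + 1) / q t))
  have hHm : Measurable H := by fun_prop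
  have hf2 : ∀ s, 0 < s → ENNReal.ofReal (f s ^ 2) ≤
      (∫⁻ t in Set.Ioi s, H t) * ENNReal.ofReal (g s ^ (-c) / c) := by
    intro s hs
    have h1 := aux_cs (volume.restrict (Set.Ioi s))
      (fun t => ENNReal.ofReal (h t * √(g t ^ (c + 1) / q t)))
      (fun t => ENNReal.ofReal (√(g t ^ (-c - 1) * q t))) (by fun_prop) (by fun_prop)
    rw [ENNReal.ofReal_pow (hf s hs)]
    refine (pow_le_pow_left' (hfh s hs) 2).trans ?_
    have e0 : ∫⁻ t in Set.Ioi s, ENNReal.ofReal (h t) = ∫⁻ t in Set.Ioi s,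
        ENNReal.ofReal (h t * √(g t ^ (c + 1) / q t)) *
          ENNReal.ofReal (√(g t ^ (-c - 1) * q t)) := by
      refine setLIntegral_congr_fun measurableSet_Ioi fun t ht => ?_
      have ht : 0 < t := hs.trans ht
      have hg' := hg t ht
      have hq' := hq t ht
      have hh' := hh t ht
      have hgp := Real.rpow_pos_of_pos hg' (c + 1)
      rw [← ENNReal.ofReal_mul (by positivity), mul_assoc, ← Real.sqrt_mul (by positivity)]
      have : g t ^ (-c - 1) = (g t ^ (c + 1))⁻¹ := by
        rw [← Real.rpow_neg hg'.le]; congr 1; ring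
      rw [this]
      have : g t ^ (c + 1) / q t * ((g t ^ (c + 1))⁻¹ * q t) = 1 := by field_simp
      rw [this]; simp
    have e1 : ∫⁻ t in Set.Ioi s, ENNReal.ofReal (h t * √(g t ^ (c + 1) / q t)) ^ 2
        = ∫⁻ t in Set.Ioi s, H t := by
      refine setLIntegral_congr_fun measurableSet_Ioi fun t ht => ?_
      have ht : 0 < t := hs.trans ht
      have hg' := hg t ht
      have hq' := hq t ht
      have hh' := hh t ht
      simp only [H]
      rw [← ENNReal.ofReal_pow (by positivity), mul_pow, Real.sq_sqrt (by positivity)]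
    have e2 : ∫⁻ t in Set.Ioi s, ENNReal.ofReal (√(g t ^ (-c - 1) * q t)) ^ 2
        = ∫⁻ t in Set.Ioi s, ENNReal.ofReal (g t ^ (-c - 1) * q t) := by
      refine setLIntegral_congr_fun measurableSet_Ioi fun t ht => ?_
      rw [← ENNReal.ofReal_pow (by positivity), Real.sq_sqrt (hpn _ _ (hs.trans ht))]
    rw [e0]
    refine h1.trans ?_
    rw [e1, e2]
    gcongr
    exact hD s hs
  calc ∫⁻ s in Set.Ioi (0:ℝ), ENNReal.ofReal (c ^ 2 * f s ^ 2 * (g s ^ (2 * c - 1) * q s))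
      ≤ ∫⁻ s in Set.Ioi (0:ℝ), (ENNReal.ofReal c * ENNReal.ofReal (g s ^ (c - 1) * q s)) *
          ∫⁻ t in Set.Ioi s, H t := by
        refine setLIntegral_mono' measurableSet_Ioi fun s hs => ?_
        have hs : 0 < s := hs
        have hg' := hg s hs
        have hq' := hq s hs
        have : c ^ 2 * f s ^ 2 * (g s ^ (2 * c - 1) * q s) =
          f s ^ 2 * (c ^ 2 * (g s ^ (2 * c - 1) * q s)) := by ring
        rw [this, ENNReal.ofReal_mul (by positivity)]
        refine (mul_le_mul_left (hf2 s hs) _).trans_eq ?_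
        rw [mul_assoc, mul_comm, ← ENNReal.ofReal_mul (by positivity),
          ← ENNReal.ofReal_mul (by positivity)]
        congr 2
        have : g s ^ (c - 1) = g s ^ (-c) * g s ^ (2 * c - 1) := by
          rw [← Real.rpow_add hg']; congr 1; ring
        rw [this]
        field_simp
    _ ≤ ∫⁻ t in Set.Ioi (0:ℝ), H t * ∫⁻ s in Set.Ioc 0 t,
          (ENNReal.ofReal c * ENNReal.ofReal (g s ^ (c - 1) * q s)) :=
        aux_swap _ _ (by fun_prop) hHm
    _ ≤ _ := by
        refine setLIntegral_mono' measurableSet_Ioi fun t ht => ?_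
        have ht : 0 < t := ht
        have hg' := hg t ht
        have hq' := hq t ht
        rw [lintegral_const_mul _ (by fun_prop)]
        refine (mul_le_mul_right (mul_le_mul_right (hE t ht) _) _).trans_eq ?_
        simp only [H]
        rw [← ENNReal.ofReal_mul (by positivity), ← ENNReal.ofReal_mul (by positivity)]
        congr 1
        have : g t ^ (2 * c + 1) = g t ^ (c + 1) * g t ^ c := by
          rw [← Real.rpow_add hg']; congr 1; ring
        rw [this]
        field_simp

lemma aux_omega (N : ℕ) (hN : 3 ≤ N) : 0 < omegaN N := by
  unfold omegaN
  have : (0:ℝ) < N := by exact_mod_cast (by omega : 0 < N)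
  have := Real.Gamma_pos_of_pos (s := (N:ℝ) / 2) (by positivity)
  have := Real.pi_pos
  positivity

/-- One-dimensional form of the weighted Hardy inequality on a
Cartan–Hadamard model manifold with weight `Ψ(r)^{N-1}`, `Ψ(r) = r/ψ(r)`:
`((N−2)/2)² ∫₀^∞ f² G^{N−3} ψ(G)^{1−N} ds ≤ ω_N² ∫₀^∞ f'² (ψ(G)·G)^{N−1} ds`. -/
theorem stmt_17 (N : ℕ) (hN : 3 ≤ N) (ψ V G : ℝ → ℝ)
    (hψ : ContDiff ℝ (⊤ : ℕ∞) ψ) (h0 : ψ 0 = 0) (h1 : deriv ψ 0 = 1)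
    (hpos : ∀ r : ℝ, 0 < r → 0 < ψ r)
    (hconv : ∀ r : ℝ, 0 < r → 0 ≤ deriv (deriv ψ) r)
    (hV : ∀ r : ℝ, 0 ≤ r → V r = omegaN N * ∫ t in (0:ℝ)..r, ψ t ^ (N - 1))
    (hGV : ∀ r : ℝ, 0 ≤ r → G (V r) = r)
    (hVG : ∀ s : ℝ, 0 ≤ s → 0 ≤ G s ∧ V (G s) = s)
    (f : ℝ → ℝ) (hf0 : ∀ s : ℝ, 0 < s → 0 ≤ f s)
    (hanti : AntitoneOn f (Set.Ioi 0))
    (hac : ∀ a b : ℝ, 0 < a → a ≤ b → f b - f a = ∫ t in a..b, deriv f t)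
    (hlim : Filter.Tendsto f Filter.atTop (nhds 0))
    (hfin : IntegrableOn
      (fun s => (deriv f s) ^ 2 * (ψ (G s) * G s) ^ (N - 1)) (Set.Ioi 0)) :
    ∫⁻ s in Set.Ioi (0:ℝ),
        ENNReal.ofReal
          ((((N : ℝ) - 2) / 2) ^ 2 * (f s) ^ 2 * G s ^ ((N : ℝ) - 3) *
            ψ (G s) ^ ((1:ℝ) - (N : ℝ))) ≤
      ∫⁻ s in Set.Ioi (0:ℝ),
        ENNReal.ofReal
          (omegaN N ^ 2 * (deriv f s) ^ 2 * (ψ (G s) * G s) ^ (N - 1)) := by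
  have hω := aux_omega N hN
  have hN3 : (3:ℝ) ≤ N := by exact_mod_cast hN
  have hψc : Continuous ψ := hψ.continuous
  have hpc : Continuous fun t => ψ t ^ (N - 1) := hψc.pow _
  have hVd : ∀ r, 0 < r → HasDerivAt V (omegaN N * ψ r ^ (N - 1)) r := by
    intro r hr
    have h := (intervalIntegral.integral_hasDerivAt_right
      (hpc.intervalIntegrable 0 r) (hpc.stronglyMeasurableAtFilter _ _) hpc.continuousAt).const_mul
        (omegaN N)
    refine h.congr_of_eventuallyEq ?_
    filter_upwards [Ioi_mem_nhds hr] with x hx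
    exact hV x (le_of_lt hx)
  have hV0 : V 0 = 0 := by rw [hV 0 le_rfl]; simp
  have hVmono : StrictMonoOn V (Set.Ici 0) := by
    intro x hx y hy hxy
    have hx : 0 ≤ x := hx
    rw [hV x hx, hV y (hx.trans hxy.le)]
    refine mul_lt_mul_of_pos_left ?_ hω
    rw [← sub_pos, intervalIntegral.integral_interval_sub_left (hpc.intervalIntegrable _ _)
      (hpc.intervalIntegrable _ _)]
    refine intervalIntegral.intervalIntegral_pos_of_pos_on (hpc.intervalIntegrable _ _)
      (fun t ht => ?_) hxy
    exact pow_pos (hpos t (hx.trans_lt ht.1)) _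
  have hGpos : ∀ s, 0 < s → 0 < G s := by
    intro s hs
    rcases (hVG s hs.le).1.eq_or_lt with h | h
    · have := (hVG s hs.le).2
      rw [← h, hV0] at this
      linarith
    · exact h
  have hVpos : ∀ r, 0 < r → 0 < V r := by
    intro r hr
    have := hVmono (Set.mem_Ici.2 le_rfl) (Set.mem_Ici.2 hr.le) hr
    rwa [hV0] at this
  have hGmono : MonotoneOn G (Set.Ioi 0) := by
    intro x hx y hy hxy
    have hx : 0 < x := hx
    have hy : 0 < y := hy
    rw [← hVmono.le_iff_le (hVG x hx.le).1 (hVG y hy.le).1, (hVG x hx.le).2, (hVG y hy.le).2]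
    exact hxy
  have hGc : ∀ s, 0 < s → ContinuousAt G s := by
    intro s hs
    refine continuousAt_of_monotoneOn_of_image_mem_nhds hGmono (Ioi_mem_nhds hs) ?_
    refine Filter.mem_of_superset (Ioi_mem_nhds (hGpos s hs)) fun r hr => ?_
    exact ⟨V r, hVpos r hr, hGV r (le_of_lt hr)⟩
  have hGd : ∀ s, 0 < s → HasDerivAt G (omegaN N * ψ (G s) ^ (N - 1))⁻¹ s := by
    intro s hs
    have hp := pow_pos (hpos _ (hGpos s hs)) (N - 1)
    refine HasDerivAt.of_local_left_inverse (hGc s hs) (hVd _ (hGpos s hs)) (by positivity) ?_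
    filter_upwards [Ioi_mem_nhds hs] with x hx
    exact (hVG x (le_of_lt hx)).2
  let g : ℝ → ℝ := (Set.Ioi 0).indicator G
  have hgG : ∀ s, 0 < s → g s = G s := fun s hs => Set.indicator_of_mem (Set.mem_Ioi.2 hs) G
  have hgm : Measurable g := by
    have hc : ContinuousOn G (Set.Ioi 0) := fun s hs => (hGc s hs).continuousWithinAt
    have h := hc.measurable_piecewise (g := fun _ => (0:ℝ)) continuousOn_const measurableSet_Ioi
    convert h using 1
    ext s
    by_cases hs : 0 < s <;> simp [g, hs, Set.piecewise]
  let q : ℝ → ℝ := fun s => (omegaN N * ψ (g s) ^ (N - 1))⁻¹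
  have hqm : Measurable q := by
    have := hψc.measurable.comp hgm
    exact ((this.pow_const (N - 1)).const_mul _).inv
  have hgd : ∀ s, 0 < s → HasDerivAt g (q s) s := by
    intro s hs
    simp only [q, hgG s hs]
    refine (hGd s hs).congr_of_eventuallyEq ?_
    filter_upwards [Ioi_mem_nhds hs] with x hx
    exact hgG x hx
  have hgpos : ∀ s, 0 < s → 0 < g s := fun s hs => by rw [hgG s hs]; exact hGpos s hs
  have hqpos : ∀ s, 0 < s → 0 < q s := fun s hs => by
    have := pow_pos (hpos _ (hgpos s hs)) (N - 1)
    simp only [q]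
    positivity
  have hqc : ContinuousOn q (Set.Ioi 0) := by
    intro s hs
    have h1 : ContinuousAt g s := (hgd s hs).continuousAt
    have h2 : ContinuousAt (fun s => omegaN N * ψ (g s) ^ (N - 1)) s :=
      continuousAt_const.mul ((ContinuousAt.comp hψc.continuousAt h1).pow _)
    refine (h2.inv₀ ?_).continuousWithinAt
    have := pow_pos (hpos _ (hgpos s hs)) (N - 1)
    positivity
  have hh : ∀ s, 0 < s → 0 ≤ - deriv f s := by
    intro s hs
    have h := (hanti.derivWithin_nonpos (x := s))
    rw [derivWithin_of_mem_nhds (Ioi_mem_nhds hs)] at h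
    linarith
  have hfh : ∀ s, 0 < s → ENNReal.ofReal (f s) ≤
      ∫⁻ t in Set.Ioi s, ENNReal.ofReal (- deriv f t) := by
    intro s hs
    have hT : Filter.Tendsto (fun b => ENNReal.ofReal (f s - f b)) Filter.atTop
        (nhds (ENNReal.ofReal (f s))) := by
      have := (tendsto_const_nhds (x := f s)).sub hlim
      rw [sub_zero] at this
      exact (ENNReal.continuous_ofReal.tendsto _).comp this
    refine le_of_tendsto hT ?_
    filter_upwards [Filter.eventually_ge_atTop s] with b hb
    have h := hac s b hs hb
    have : f s - f b = ∫ t in Set.Ioc s b, - deriv f t := by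
      rw [integral_neg, ← intervalIntegral.integral_of_le hb, ← h]
      ring
    rw [this]
    refine (aux_ofReal _ _ ?_).trans (lintegral_mono_set Set.Ioc_subset_Ioi_self)
    refine (ae_restrict_iff' measurableSet_Ioc).2 (Filter.Eventually.of_forall fun x hx => ?_)
    exact hh x (hs.trans hx.1)
  have key := aux_core (((N:ℝ) - 2) / 2) (by linarith) f g q (fun s => - deriv f s) hgm hqm
    (measurable_deriv f).neg hgpos hqpos hgd hqc hh hf0 hfh
  have key2 := mul_le_mul_right key (ENNReal.ofReal (omegaN N))
  rw [← lintegral_const_mul' _ _ ENNReal.ofReal_ne_top,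
    ← lintegral_const_mul' _ _ ENNReal.ofReal_ne_top] at key2
  have hcast : ((N - 1 : ℕ) : ℝ) = (N:ℝ) - 1 := by
    rw [Nat.cast_sub (by omega)]; simp
  refine (le_of_eq ?_).trans (key2.trans (le_of_eq ?_))
  · refine setLIntegral_congr_fun measurableSet_Ioi fun s hs => ?_
    have hs : 0 < s := hs
    have hp := hpos _ (hGpos s hs)
    simp only [q]
    rw [← ENNReal.ofReal_mul hω.le, hgG s hs]
    congr 1
    have e1 : (2 * (((N:ℝ) - 2) / 2) - 1) = (N:ℝ) - 3 := by ring
    have e2 : ψ (G s) ^ ((1:ℝ) - N) = (ψ (G s) ^ (N - 1))⁻¹ := by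
      rw [← Real.rpow_natCast, ← Real.rpow_neg hp.le, hcast]
      congr 1; ring
    rw [e1, e2]
    field_simp
  · refine setLIntegral_congr_fun measurableSet_Ioi fun s hs => ?_
    have hs : 0 < s := hs
    have hp := hpos _ (hGpos s hs)
    simp only [q]
    rw [← ENNReal.ofReal_mul hω.le, hgG s hs]
    congr 1
    have e1 : (2 * (((N:ℝ) - 2) / 2) + 1) = ((N - 1 : ℕ) : ℝ) := by rw [hcast]; ring
    rw [e1, Real.rpow_natCast, mul_pow, div_inv_eq_mul]
    ring
end
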